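/- arXiv:math/0306232 — 2 statements merged into one kernel-verified Lean document; each statement's English description precedes it below -/
import Mathlib

section
/- For every integer n, there is an automorphism of the free group F on x and y mapping x^{2n+1} y x^{−2n} y to x^{4n+1} y^2; consequently the one-relator group ⟨x, y | x^{2n+1} y x^{−2n} y⟩ (the quotient of F by the normal closure of x^{2n+1} y x^{−2n} y) is isomorphic to G_{2, 4n+1}. (This says the slope-2 embedding of the twist knot K_n is (2, 4n+1) Seifert-fibered with respect to the outside handlebody.) -/
/-- The free group on two generators; `xx` and `yy` are the generators. -/
def xx : FreeGroup (Fin 2) := FreeGroup.of 0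
def yy : FreeGroup (Fin 2) := FreeGroup.of 1

/-- The word `w_{p,q,r,m}` represented by the twisted torus knot
`T(p,q) + r T(m,n)` in the inside handlebody: writing `r = r̄ + α p`
with `0 ≤ r̄ < p`, it is `∏_{j=0}^{p-1} x^{m e_j} y` where `e_j = α+1`
if `(j q mod p) < r̄` and `e_j = α` otherwise. -/
def w (p q r : ℕ) (m : ℤ) : FreeGroup (Fin 2) :=
  ((List.range p).map (fun j =>
    xx ^ (m * ((if j * q % p < r % p then r / p + 1 else r / p : ℕ) : ℤ)) * yy)).prod

/-- An element of the free group of rank two is primitive iff some automorphism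
carries the generator `xx` to it. -/
def IsPrimitive (g : FreeGroup (Fin 2)) : Prop :=
  ∃ φ : FreeGroup (Fin 2) ≃* FreeGroup (Fin 2), φ xx = g

/-- The one-relator group `G_{a,b} = ⟨x, y | x^a y^b⟩`. -/
abbrev Gg (a b : ℤ) : Type := PresentedGroup ({xx ^ a * yy ^ b} : Set (FreeGroup (Fin 2)))

/-- `g` is `(a,b)` Seifert-fibered if `F / ⟪g⟫ ≅ G_{a,b}`. -/
def IsSF (g : FreeGroup (Fin 2)) (a b : ℤ) : Prop :=
  Nonempty (PresentedGroup ({g} : Set (FreeGroup (Fin 2))) ≃* Gg a b)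

/-
The word `x^{2n+1} y x^{-2n} y` equals `x^{4n+1} (x^{-2n} y)^2`, and `x, x^{-2n} y` is again a basis
of the free group, so the automorphism fixing `x` and sending `x^{-2n} y` to `y` does the job.
The exponents come out in the order opposite to `G_{2, 4n+1}`; exchanging the generators and a
cyclic permutation of the relator repair this.
-/

section FreeGroup

variable {α β : Type*}

/-- The isomorphism of presented groups induced by an isomorphism `φ` of the free groups on the
generators, the relators being transported along `φ`. -/
def presentedGroupCongr (φ : FreeGroup α ≃* FreeGroup β) (rels : Set (FreeGroup α)) :
    PresentedGroup rels ≃* PresentedGroup (φ '' rels) :=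
  QuotientGroup.congr _ _ φ (Subgroup.map_normalClosure rels φ.toMonoidHom φ.surjective)

section Transvection

variable [DecidableEq α]

/-- The endomorphism of the free group that sends the generator `j` to `i ^ k * j` and fixes the
other generators. -/
def transvectionHom (i j : α) (k : ℤ) : FreeGroup α →* FreeGroup α :=
  FreeGroup.lift (Function.update FreeGroup.of j (FreeGroup.of i ^ k * FreeGroup.of j))

theorem transvectionHom_of_self (i j : α) (k : ℤ) :
    transvectionHom i j k (FreeGroup.of j) = FreeGroup.of i ^ k * FreeGroup.of j := by
  simp [transvectionHom]

theorem transvectionHom_of_of_ne {j l : α} (hl : l ≠ j) (i : α) (k : ℤ) :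
    transvectionHom i j k (FreeGroup.of l) = FreeGroup.of l := by
  simp [transvectionHom, hl]

theorem transvectionHom_comp_neg {i j : α} (hij : i ≠ j) (k : ℤ) :
    (transvectionHom i j (-k)).comp (transvectionHom i j k) = MonoidHom.id (FreeGroup α) := by
  ext l
  obtain rfl | hl := eq_or_ne l j
  · simp [transvectionHom_of_self, transvectionHom_of_of_ne hij]
  · simp [transvectionHom_of_of_ne hl]

/-- The transvection (Nielsen transformation) `j ↦ i ^ k * j`, for distinct generators `i` and `j`,
as an automorphism of the free group. -/
def transvection {i j : α} (hij : i ≠ j) (k : ℤ) : FreeGroup α ≃* FreeGroup α :=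
  (transvectionHom i j k).toMulEquiv (transvectionHom i j (-k)) (transvectionHom_comp_neg hij k)
    (by simpa only [neg_neg] using transvectionHom_comp_neg hij (-k))

theorem transvection_of_self {i j : α} (hij : i ≠ j) (k : ℤ) :
    transvection hij k (FreeGroup.of j) = FreeGroup.of i ^ k * FreeGroup.of j :=
  transvectionHom_of_self i j k

theorem transvection_of_of_ne {i j l : α} (hij : i ≠ j) (hl : l ≠ j) (k : ℤ) :
    transvection hij k (FreeGroup.of l) = FreeGroup.of l :=
  transvectionHom_of_of_ne hl i k

end Transvection

end FreeGroup

namespace IsSF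

variable {g h : FreeGroup (Fin 2)} {a b : ℤ}

theorem of_map (φ : FreeGroup (Fin 2) ≃* FreeGroup (Fin 2)) (hg : IsSF (φ g) a b) :
    IsSF g a b := by
  rw [IsSF, ← Set.image_singleton] at hg
  exact hg.map (presentedGroupCongr φ {g}).trans

protected theorem mul_comm (hgh : IsSF (g * h) a b) : IsSF (h * g) a b :=
  of_map (MulAut.conj g) (by rwa [MulAut.conj_apply, ← mul_assoc, mul_inv_cancel_right])

theorem zpow_mul_zpow (a b : ℤ) : IsSF (xx ^ a * yy ^ b) b a := by
  let swap : FreeGroup (Fin 2) ≃* FreeGroup (Fin 2) := FreeGroup.freeGroupCongr (Equiv.swap 0 1)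
  have swap_word : swap (yy ^ b * xx ^ a) = xx ^ b * yy ^ a := by simp [swap, xx, yy]
  have swapped : IsSF (swap (yy ^ b * xx ^ a)) b a := swap_word ▸ ⟨MulEquiv.refl _⟩
  exact swapped.of_map.mul_comm

end IsSF

theorem zpow_mul_mul_zpow_mul {G : Type*} [Group G] (x y : G) (a b : ℤ) :
    x ^ a * y * x ^ b * y = x ^ (a - b) * (x ^ b * y) ^ (2 : ℤ) := by
  rw [zpow_two]
  group

theorem stmt13_general (a b m : ℤ) :
    (∃ φ : FreeGroup (Fin 2) ≃* FreeGroup (Fin 2),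
      φ (xx ^ a * (xx ^ b * yy) ^ m) = xx ^ a * yy ^ m) ∧
    IsSF (xx ^ a * (xx ^ b * yy) ^ m) m a := by
  let τ := transvection (zero_ne_one (α := Fin 2)) b
  have τ_xx : τ xx = xx := transvection_of_of_ne _ zero_ne_one b
  have τ_yy : τ yy = xx ^ b * yy := transvection_of_self _ b
  have τ_symm_word : τ.symm (xx ^ a * (xx ^ b * yy) ^ m) = xx ^ a * yy ^ m := by
    rw [MulEquiv.symm_apply_eq, map_mul, map_zpow, map_zpow, τ_xx, τ_yy]
  exact ⟨⟨τ.symm, τ_symm_word⟩, .of_map τ.symm (τ_symm_word ▸ .zpow_mul_zpow a m)⟩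

/-- For every integer `n`, some automorphism of the free group maps
`x^{2n+1} y x^{-2n} y` to `x^{4n+1} y^2`; consequently
`⟨x, y | x^{2n+1} y x^{-2n} y⟩ ≅ G_{2, 4n+1}` (the slope-2 embedding of the
twist knot `K_n` is `(2, 4n+1)` Seifert-fibered w.r.t. the outside handlebody). -/
theorem stmt13 (n : ℤ) :
    (∃ φ : FreeGroup (Fin 2) ≃* FreeGroup (Fin 2),
      φ (xx ^ (2 * n + 1) * yy * xx ^ (-(2 * n)) * yy) = xx ^ (4 * n + 1) * yy ^ (2 : ℤ)) ∧
    IsSF (xx ^ (2 * n + 1) * yy * xx ^ (-(2 * n)) * yy) 2 (4 * n + 1) := by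
  rw [zpow_mul_mul_zpow_mul, show 2 * n + 1 - -(2 * n) = 4 * n + 1 by ring]
  exact stmt13_general (4 * n + 1) (-(2 * n)) 2
end

section
/- Let a and b be nonzero integers. The one-relator group G_{a,b} = ⟨x, y | x^a y^b⟩ is isomorphic to the infinite cyclic group ℤ if and only if |a| = 1 or |b| = 1. -/
/-!
If `G_{a,b}` is infinite cyclic, its generators commute, hence so do those of its quotient
`ℤ/a ∗ ℤ/b`; but nontrivial elements of the two factors of a free product never commute, so one
of the factors is trivial. Conversely, if `a = ±1`, the relation gives `x = y ^ (-ab)`, which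
eliminates `x` and leaves the free group on `y`.
-/

-- Let `M` and `N` act regularly on the axes `M × {1}` and `{1} × N` of `M × N`, each fixing all
-- other points. If `m, n ≠ 1`, then `m * n` sends `(1, 1)` to `(1, n)`, but `n * m` sends it to
-- `(m, 1)`.
open Monoid.Coprod Equiv.Perm in
theorem commute_inl_inr_iff {M N : Type*} [Group M] [Group N] {m : M} {n : N} :
    Commute (inl m : Monoid.Coprod M N) (inr n) ↔ m = 1 ∨ n = 1 := by
  constructor
  · intro hcomm
    by_contra! ⟨hm, hn⟩
    let ι : M ↪ M × N := ⟨fun u => (u, 1), Prod.mk_left_injective 1⟩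
    let κ : N ↪ M × N := ⟨fun v => (1, v), Prod.mk_right_injective 1⟩
    let f : M →* Equiv.Perm (M × N) := (viaEmbeddingHom ι).comp (MulAction.toPermHom M M)
    let g : N →* Equiv.Perm (M × N) := (viaEmbeddingHom κ).comp (MulAction.toPermHom N N)
    have f_one : f m (1, 1) = (m, 1) :=
      (viaEmbedding_apply _ ι 1).trans (congrArg ι (mul_one m))
    have g_one : g n (1, 1) = (1, n) :=
      (viaEmbedding_apply _ κ 1).trans (congrArg κ (mul_one n))
    have f_fixes : f m (1, n) = (1, n) :=
      viaEmbedding_apply_of_notMem _ ι _ fun ⟨_, hu⟩ => hn (congrArg Prod.snd hu).symm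
    have g_fixes : g n (m, 1) = (m, 1) :=
      viaEmbedding_apply_of_notMem _ κ _ fun ⟨_, hv⟩ => hm (congrArg Prod.fst hv).symm
    have hfg : Commute (f m) (g n) := by simpa using hcomm.map (lift f g)
    have hpoint : ((1, n) : M × N) = (m, 1) := by
      calc (1, n) = f m (g n (1, 1)) := by rw [g_one, f_fixes]
        _ = g n (f m (1, 1)) := Equiv.congr_fun hfg.eq (1, 1)
        _ = (m, 1) := by rw [f_one, g_fixes]
    exact hn (congrArg Prod.snd hpoint)
  · rintro (rfl | rfl) <;> simp

theorem orderOf_ofAdd_one (n : ℕ) : orderOf (Multiplicative.ofAdd (1 : ZMod n)) = n :=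
  (orderOf_ofAdd_eq_addOrderOf _).trans (ZMod.addOrderOf_one n)

theorem ofAdd_one_zpow_eq_one (n : ℤ) : Multiplicative.ofAdd (1 : ZMod n.natAbs) ^ n = 1 := by
  rw [← orderOf_dvd_iff_zpow_eq_one, orderOf_ofAdd_one, Int.natAbs_dvd]

theorem ofAdd_one_eq_one_iff {n : ℤ} :
    Multiplicative.ofAdd (1 : ZMod n.natAbs) = 1 ↔ |n| = 1 := by
  rw [← orderOf_eq_one_iff, orderOf_ofAdd_one, Int.abs_eq_natAbs, Nat.cast_eq_one]

namespace Gg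

/-- The generator `x` of `G_{a,b}`. -/
def x (a b : ℤ) : Gg a b := PresentedGroup.of 0

/-- The generator `y` of `G_{a,b}`. -/
def y (a b : ℤ) : Gg a b := PresentedGroup.of 1

theorem x_zpow_mul_y_zpow (a b : ℤ) : x a b ^ a * y a b ^ b = 1 :=
  PresentedGroup.one_of_mem (rels := {xx ^ a * yy ^ b}) rfl

section Lift

variable {H : Type*} [Group H] {a b : ℤ}

/-- The universal property of `G_{a,b}`: the homomorphism sending `x` to `s` and `y` to `t`. -/
def lift (s t : H) (h : s ^ a * t ^ b = 1) : Gg a b →* H :=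
  PresentedGroup.toGroup (f := ![s, t]) (by simpa [xx, yy] using h)

@[simp]
theorem lift_x (s t : H) (h : s ^ a * t ^ b = 1) : lift s t h (x a b) = s :=
  PresentedGroup.toGroup.of _

@[simp]
theorem lift_y (s t : H) (h : s ^ a * t ^ b = 1) : lift s t h (y a b) = t :=
  PresentedGroup.toGroup.of _

theorem hom_ext {f g : Gg a b →* H} (hx : f (x a b) = g (x a b)) (hy : f (y a b) = g (y a b)) :
    f = g :=
  PresentedGroup.ext (Fin.forall_fin_two.2 ⟨hx, hy⟩)

end Lift

/-- The homomorphism exchanging the two generators, one half of `Gg.swap`. -/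
def swapHom (a b : ℤ) : Gg a b →* Gg b a :=
  lift (y b a) (x b a) (mul_eq_one_comm.1 (x_zpow_mul_y_zpow b a))

/-- The symmetry `G_{a,b} ≃ G_{b,a}` exchanging the two generators. -/
def swap (a b : ℤ) : Gg a b ≃* Gg b a :=
  (swapHom a b).toMulEquiv (swapHom b a)
    (hom_ext (by simp [swapHom]) (by simp [swapHom]))
    (hom_ext (by simp [swapHom]) (by simp [swapHom]))

/-- The quotient map of `G_{a,b}` onto the free product `ℤ/a ∗ ℤ/b`, which kills the central element
`x ^ a`. -/
def toCoprod (a b : ℤ) :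
    Gg a b →* Monoid.Coprod (Multiplicative (ZMod a.natAbs)) (Multiplicative (ZMod b.natAbs)) :=
  lift (Monoid.Coprod.inl (Multiplicative.ofAdd 1))
    (Monoid.Coprod.inr (Multiplicative.ofAdd 1)) <| by
    rw [← MonoidHom.map_zpow, ← MonoidHom.map_zpow, ofAdd_one_zpow_eq_one,
      ofAdd_one_zpow_eq_one, map_one, map_one, one_mul]

theorem abs_eq_one_or_abs_eq_one_of_commute {a b : ℤ} (hcomm : Commute (x a b) (y a b)) :
    |a| = 1 ∨ |b| = 1 := by
  have himage := hcomm.map (toCoprod a b)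
  rwa [toCoprod, lift_x, lift_y, commute_inl_inr_iff, ofAdd_one_eq_one_iff,
    ofAdd_one_eq_one_iff] at himage

theorem x_eq_y_zpow {a : ℤ} (b : ℤ) (ha : |a| = 1) : x a b = y a b ^ (-b * a) := by
  have ha' : a * a = 1 := Int.isUnit_mul_self (Int.isUnit_iff_abs_eq.2 ha)
  calc x a b = (x a b ^ a) ^ a := by rw [← zpow_mul, ha', zpow_one]
    _ = (y a b ^ (-b)) ^ a := by
      rw [eq_inv_of_mul_eq_one_left (x_zpow_mul_y_zpow a b), zpow_neg]
    _ = y a b ^ (-b * a) := (zpow_mul _ _ _).symm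

/-- For `a = ±1`, the isomorphism of `G_{a,b}` with `ℤ` that takes `y` to `1`. -/
def mulEquivInt {a : ℤ} (b : ℤ) (ha : |a| = 1) : Gg a b ≃* Multiplicative ℤ :=
  have ha' : a * a = 1 := Int.isUnit_mul_self (Int.isUnit_iff_abs_eq.2 ha)
  have hrel : Multiplicative.ofAdd (-b * a) ^ a * Multiplicative.ofAdd 1 ^ b = 1 := by
    rw [← ofAdd_zsmul, ← ofAdd_zsmul, ← ofAdd_add, ofAdd_eq_one, smul_eq_mul, smul_eq_mul]
    linear_combination -b * ha'
  (lift _ _ hrel).toMulEquiv (zpowersHom _ (y a b))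
    (hom_ext (by simp [zpowersHom_apply, x_eq_y_zpow b ha]) (by simp [zpowersHom_apply]))
    (MonoidHom.ext_mint (by simp [zpowersHom_apply]))

end Gg

/-- For nonzero integers `a, b`, the one-relator group
`G_{a,b} = ⟨x, y | x^a y^b⟩` is infinite cyclic iff `|a| = 1` or `|b| = 1`. -/
theorem stmt19 (a b : ℤ) (ha : a ≠ 0) (hb : b ≠ 0) :
    Nonempty (Gg a b ≃* Multiplicative ℤ) ↔ |a| = 1 ∨ |b| = 1 := by
  constructor
  · rintro ⟨e⟩
    have hcomm : Commute (Gg.x a b) (Gg.y a b) :=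
      e.injective (by rw [map_mul, map_mul, mul_comm])
    exact Gg.abs_eq_one_or_abs_eq_one_of_commute hcomm
  · rintro (ha_unit | hb_unit)
    · exact ⟨Gg.mulEquivInt b ha_unit⟩
    · exact ⟨(Gg.swap a b).trans (Gg.mulEquivInt a hb_unit)⟩
end
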